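/- arXiv:2107.09701 — 7 statements merged into one kernel-verified Lean document; each statement's English description precedes it below -/
import Mathlib

section
/- Let X be a separable Banach space, let Φ : X × Y → ℝ satisfy conditions (i), (ii) and (iii), and let μ0 be a Borel probability measure on X such that there exists α > 0 with ∫_X exp(α‖u‖_X²) dμ0(u) < ∞ and such that μ0 assigns positive mass to every open ball of X. Then for every y ∈ Y the normalization constant Z(y) = ∫_X exp(−Φ(u;y)) dμ0(u) satisfies 0 < Z(y) < ∞, and the measure μ^y on X with density dμ^y/dμ0(u) = exp(−Φ(u;y))/Z(y) with respect to μ0 is a well-defined Borel probability measure on X. -/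
open MeasureTheory

/-!
Condition (i) with `ε = α` gives `exp (-Φ(u; y)) ≤ exp (-M) * exp (α‖u‖²)`, so the exponential
moment of `μ0` makes `exp (-Φ(·; y))` integrable; condition (iii) supplies its measurability. The
measure `μ^y` is then the exponential tilting of `μ0` by `-Φ(·; y)`.
-/

open Real Metric
open scoped NNReal

theorem continuous_of_lipschitzOnWith_ball {X E : Type*} [PseudoMetricSpace X]
    [PseudoMetricSpace E] {f : X → E} {x₀ : X} {r₀ : ℝ}
    (hf : ∀ r > r₀, ∃ K : ℝ≥0, LipschitzOnWith K f (ball x₀ r)) : Continuous f := by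
  refine LocallyLipschitz.continuous fun x => ?_
  obtain ⟨r, hr⟩ := exists_gt (max r₀ (dist x x₀))
  obtain ⟨hr₀, hx⟩ := max_lt_iff.mp hr
  obtain ⟨K, hK⟩ := hf r hr₀
  exact ⟨K, ball x₀ r, isOpen_ball.mem_nhds hx, hK⟩

theorem continuous_of_norm_sub_le_of_norm_lt {X E : Type*} [SeminormedAddCommGroup X]
    [SeminormedAddCommGroup E] {f : X → E} {r₀ : ℝ}
    (hf : ∀ r > r₀, ∃ L : ℝ, ∀ u u' : X, ‖u‖ < r → ‖u'‖ < r → ‖f u - f u'‖ ≤ L * ‖u - u'‖) :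
    Continuous f := by
  refine continuous_of_lipschitzOnWith_ball (x₀ := 0) (r₀ := r₀) fun r hr => ?_
  obtain ⟨L, hL⟩ := hf r hr
  refine ⟨L.toNNReal, LipschitzOnWith.of_dist_le' fun u hu u' hu' => ?_⟩
  simpa only [dist_eq_norm] using hL u u' (mem_ball_zero_iff.mp hu) (mem_ball_zero_iff.mp hu')

section ExponentialDensity

variable {Ω : Type*} [MeasurableSpace Ω] {μ : Measure Ω}

theorem integrable_exp_neg_of_sub_le {V W : Ω → ℝ} {M : ℝ} (hV : AEMeasurable V μ)
    (hW : Integrable (fun x => exp (W x)) μ) (hVW : ∀ᵐ x ∂μ, M - W x ≤ V x) :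
    Integrable (fun x => exp (-V x)) μ := by
  refine (hW.const_mul (exp (-M))).mono' hV.neg.exp.aestronglyMeasurable ?_
  filter_upwards [hVW] with x hx
  calc ‖exp (-V x)‖ = exp (-V x) := norm_of_nonneg (exp_nonneg _)
    _ ≤ exp (-M + W x) := exp_le_exp.mpr (by linarith)
    _ = exp (-M) * exp (W x) := exp_add _ _

theorem lintegral_ofReal_exp {f : Ω → ℝ} (hf : Integrable (fun x => exp (f x)) μ) :
    ∫⁻ x, ENNReal.ofReal (exp (f x)) ∂μ = ENNReal.ofReal (∫ x, exp (f x) ∂μ) :=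
  (ofReal_integral_eq_lintegral_ofReal hf (.of_forall fun _ => exp_nonneg _)).symm

theorem withDensity_exp_div_lintegral_eq_tilted {f : Ω → ℝ}
    (hf : Integrable (fun x => exp (f x)) μ) :
    μ.withDensity (fun x => ENNReal.ofReal (exp (f x)) / ∫⁻ x', ENNReal.ofReal (exp (f x')) ∂μ) =
      μ.tilted f := by
  rcases eq_zero_or_neZero μ with rfl | _
  · rw [withDensity_zero_left, tilted_zero_measure]
  · simp only [Measure.tilted, lintegral_ofReal_exp hf,
      ENNReal.ofReal_div_of_pos (integral_exp_pos hf)]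

theorem stmt1_general [NeZero μ] {V W : Ω → ℝ} {M : ℝ} (hV : AEMeasurable V μ)
    (hW : Integrable (fun x => exp (W x)) μ) (hVW : ∀ᵐ x ∂μ, M - W x ≤ V x) :
    0 < (∫⁻ x, ENNReal.ofReal (exp (-V x)) ∂μ) ∧
    (∫⁻ x, ENNReal.ofReal (exp (-V x)) ∂μ) < ⊤ ∧
    IsProbabilityMeasure (μ.withDensity fun x =>
      ENNReal.ofReal (exp (-V x)) / ∫⁻ x', ENNReal.ofReal (exp (-V x')) ∂μ) := by
  have hexp : Integrable (fun x => exp (-V x)) μ := integrable_exp_neg_of_sub_le hV hW hVW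
  rw [withDensity_exp_div_lintegral_eq_tilted hexp, lintegral_ofReal_exp hexp]
  exact ⟨ENNReal.ofReal_pos.mpr (integral_exp_pos hexp), ENNReal.ofReal_lt_top,
    isProbabilityMeasure_tilted hexp⟩

end ExponentialDensity

theorem stmt1 {X Y : Type*} [NormedAddCommGroup X] [NormedSpace ℝ X] [CompleteSpace X]
    [TopologicalSpace.SeparableSpace X] [MeasurableSpace X] [BorelSpace X]
    [NormedAddCommGroup Y] [NormedSpace ℝ Y] [CompleteSpace Y]
    (Φ : X → Y → ℝ)
    -- condition (i)
    (hi : ∀ ε r : ℝ, 0 < ε → 0 < r → ∃ M : ℝ, ∀ (u : X) (y : Y), ‖y‖ < r →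
      M - ε * ‖u‖ ^ 2 ≤ Φ u y)
    -- condition (ii)
    (hii : ∀ r : ℝ, 0 < r → ∃ K : ℝ, 0 < K ∧ ∀ (u : X) (y : Y), ‖u‖ < r → ‖y‖ < r →
      Φ u y ≤ K)
    -- condition (iii)
    (hiii : ∀ r : ℝ, 0 < r → ∃ L : ℝ, 0 < L ∧ ∀ (u u' : X) (y : Y),
      ‖u‖ < r → ‖u'‖ < r → ‖y‖ < r → |Φ u y - Φ u' y| ≤ L * ‖u - u'‖)
    (μ0 : Measure X) [IsProbabilityMeasure μ0]
    (α : ℝ) (hα : 0 < α)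
    (hint : Integrable (fun u => Real.exp (α * ‖u‖ ^ 2)) μ0)
    (hball : ∀ (x : X) (r : ℝ), 0 < r → 0 < μ0 (Metric.ball x r))
    (y : Y) :
    0 < (∫⁻ u, ENNReal.ofReal (Real.exp (-Φ u y)) ∂μ0) ∧
    (∫⁻ u, ENNReal.ofReal (Real.exp (-Φ u y)) ∂μ0) < ⊤ ∧
    IsProbabilityMeasure (μ0.withDensity fun u =>
      ENNReal.ofReal (Real.exp (-Φ u y)) /
        ∫⁻ u', ENNReal.ofReal (Real.exp (-Φ u' y)) ∂μ0) := by
  obtain ⟨M, hM⟩ := hi α (‖y‖ + 1) hα (by positivity)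
  have hcont : Continuous (Φ · y) := continuous_of_norm_sub_le_of_norm_lt fun r hr =>
    let ⟨L, _, hL⟩ := hiii r ((norm_nonneg y).trans_lt hr)
    ⟨L, fun u u' hu hu' => hL u u' y hu hu' hr⟩
  exact stmt1_general hcont.measurable.aemeasurable hint (.of_forall fun u => hM u y (lt_add_one _))
end

section
/- Let X be a separable Banach space and Y a Banach space, let Φ : X × Y → ℝ satisfy conditions (i), (ii) and (iv), with Φ(·;y) Borel measurable for each y ∈ Y, and let μ0 be a Borel probability measure on X such that there exists α > 0 with ∫_X exp(α‖u‖_X²) dμ0(u) < ∞ and such that μ0 assigns positive mass to every open ball of X. For each y ∈ Y let μ^y be the posterior measure with density exp(−Φ(u;y))/Z(y) with respect to μ0, where Z(y) = ∫_X exp(−Φ(u;y)) dμ0(u). Then the map y ↦ μ^y is locally Lipschitz in the 1-Wasserstein distance: for every r > 0 there exists C = C(r) > 0 such that for all y, y' ∈ Y with ‖y‖_Y, ‖y'‖_Y < r and every bounded continuous ψ : X → ℝ with Lipschitz constant at most 1, one has |∫_X ψ dμ^y − ∫_X ψ dμ^{y'}| ≤ C‖y − y'‖_Y; that is, W1(μ^y,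 μ^{y'}) ≤ C‖y − y'‖_Y. -/
open MeasureTheory

/-- The posterior measure with density `exp(-Φ(u)) / Z` with respect to `μ0`,
where `Z = ∫ exp(-Φ(u)) dμ0(u)`. -/
noncomputable def posterior {X : Type*} [MeasurableSpace X] (μ0 : Measure X) (Φ : X → ℝ) :
    Measure X :=
  μ0.withDensity fun u =>
    ENNReal.ofReal (Real.exp (-Φ u)) / ∫⁻ u', ENNReal.ofReal (Real.exp (-Φ u')) ∂μ0

/-! If `c` is the mean of `ψ` under `ν' ∝ exp(g) μ`, then `exp(g) (ψ - c)` has `μ`-integral zero, so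
for `ν ∝ exp(f) μ` one has `∫ ψ dν - ∫ ψ dν' = ∫ (exp f - exp g) (ψ - c) dμ / ∫ exp f dμ`.
For a 1-Lipschitz `ψ`, `|ψ u - c|` is at most `‖u‖` plus the first moment of `ν'`, and conditions
(i) and (iv) bound `|exp(-Φ(u;y)) - exp(-Φ(u;y'))|` by a Gaussian weight times `‖y - y'‖`.
Condition (iv) also gives `Φ(u;y) ≤ Φ(u;0) + r exp(ε‖u‖² + C)` for `‖y‖ < r`, and integrating `exp`
of minus the right-hand side bounds `Z(y)` away from zero uniformly in `y`. -/

theorem abs_exp_neg_sub_exp_neg_le {a b m : ℝ} (ha : m ≤ a) (hb : m ≤ b) :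
    |Real.exp (-a) - Real.exp (-b)| ≤ Real.exp (-m) * |a - b| := by
  wlog hab : a ≤ b generalizing a b
  · rw [abs_sub_comm, abs_sub_comm a b]
    exact this hb ha (le_of_not_ge hab)
  have hexp : Real.exp (-b) ≤ Real.exp (-a) := Real.exp_le_exp.2 (neg_le_neg hab)
  rw [abs_of_nonneg (sub_nonneg.2 hexp), abs_sub_comm, abs_of_nonneg (sub_nonneg.2 hab)]
  calc Real.exp (-a) - Real.exp (-b)
      = Real.exp (-a) * (1 - Real.exp (-(b - a))) := by
        rw [mul_sub, mul_one, ← Real.exp_add]; ring_nf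
    _ ≤ Real.exp (-a) * (b - a) := by
        refine mul_le_mul_of_nonneg_left ?_ (Real.exp_pos _).le
        linarith [Real.one_sub_le_exp_neg (b - a)]
    _ ≤ Real.exp (-m) * (b - a) := by gcongr

section Tilted

variable {X : Type*} [MeasurableSpace X] {μ : Measure X} {f g ψ : X → ℝ}

theorem posterior_eq_tilted {Φ : X → ℝ} (hΦ : Integrable (fun u => Real.exp (-Φ u)) μ) :
    posterior μ Φ = μ.tilted fun u => -Φ u := by
  rcases eq_zero_or_neZero μ with rfl | _
  · simp [posterior]
  · simp_rw [posterior, Measure.tilted, ENNReal.ofReal_div_of_pos (integral_exp_pos hΦ),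
      ofReal_integral_eq_lintegral_ofReal hΦ (.of_forall fun _ => (Real.exp_pos _).le)]

theorem integral_tilted_eq_div (f ψ : X → ℝ) :
    ∫ u, ψ u ∂(μ.tilted f) = (∫ u, Real.exp (f u) * ψ u ∂μ) / ∫ u, Real.exp (f u) ∂μ := by
  simp_rw [integral_tilted, smul_eq_mul, div_mul_eq_mul_div, integral_div]

theorem integral_tilted_sub_const [NeZero μ] (hf : Integrable (fun u => Real.exp (f u)) μ)
    (hψ : Integrable ψ (μ.tilted f)) (c : ℝ) :
    ∫ u, ψ u ∂(μ.tilted f) - c =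
      (∫ u, Real.exp (f u) * (ψ u - c) ∂μ) / ∫ u, Real.exp (f u) ∂μ := by
  have := isProbabilityMeasure_tilted hf
  rw [← integral_tilted_eq_div, integral_sub hψ (integrable_const c), integral_const]
  simp

theorem integral_tilted_sub_integral_tilted [NeZero μ]
    (hf : Integrable (fun u => Real.exp (f u)) μ) (hg : Integrable (fun u => Real.exp (g u)) μ)
    (hψf : Integrable ψ (μ.tilted f)) (hψg : Integrable ψ (μ.tilted g)) :
    ∫ u, ψ u ∂(μ.tilted f) - ∫ u, ψ u ∂(μ.tilted g) =
      (∫ u, (Real.exp (f u) - Real.exp (g u)) * (ψ u - ∫ v, ψ v ∂(μ.tilted g)) ∂μ) /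
        ∫ u, Real.exp (f u) ∂μ := by
  set c := ∫ u, ψ u ∂(μ.tilted g)
  have integrable_centered {h : X → ℝ} (hh : Integrable (fun u => Real.exp (h u)) μ)
      (hψh : Integrable ψ (μ.tilted h)) : Integrable (fun u => Real.exp (h u) * (ψ u - c)) μ := by
    have := isProbabilityMeasure_tilted hh
    exact (integrable_tilted_iff hh _).1 (hψh.sub (integrable_const c))
  have hcentered : ∫ u, Real.exp (g u) * (ψ u - c) ∂μ = 0 := by
    have hzero := integral_tilted_sub_const hg hψg c
    rwa [sub_self, eq_comm, div_eq_zero_iff, or_iff_left (integral_exp_pos hg).ne'] at hzero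
  simp_rw [integral_tilted_sub_const hf hψf c, sub_mul]
  rw [integral_sub (integrable_centered hf hψf) (integrable_centered hg hψg), hcentered, sub_zero]

end Tilted

section Lipschitz

variable {X : Type*} [SeminormedAddCommGroup X] [MeasurableSpace X] [OpensMeasurableSpace X]
  {ψ : X → ℝ} {L : NNReal}

theorem integrable_of_lipschitzWith {ν : Measure X} [IsFiniteMeasure ν] (hψ : LipschitzWith L ψ)
    (hν : Integrable (fun u => ‖u‖) ν) : Integrable ψ ν := by
  refine ((integrable_const |ψ 0|).add (hν.const_mul L)).mono'
    hψ.continuous.measurable.aestronglyMeasurable (.of_forall fun u => ?_)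
  calc ‖ψ u‖ ≤ ‖ψ 0‖ + ‖ψ u - ψ 0‖ := norm_le_norm_add_norm_sub' _ _
    _ ≤ |ψ 0| + L * ‖u‖ := by
        rw [Real.norm_eq_abs]
        gcongr
        simpa using hψ.norm_sub_le u 0

theorem abs_sub_integral_le_of_lipschitzWith {ν : Measure X} [IsProbabilityMeasure ν]
    (hψ : LipschitzWith L ψ) (hν : Integrable (fun u => ‖u‖) ν) (u : X) :
    |ψ u - ∫ v, ψ v ∂ν| ≤ L * (‖u‖ + ∫ v, ‖v‖ ∂ν) := by
  calc |ψ u - ∫ v, ψ v ∂ν| = ‖∫ v, (ψ u - ψ v) ∂ν‖ := by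
        rw [integral_sub (integrable_const _) (integrable_of_lipschitzWith hψ hν)]
        simp
    _ ≤ ∫ v, L * (‖u‖ + ‖v‖) ∂ν := by
        refine norm_integral_le_of_norm_le (((integrable_const _).add hν).const_mul _)
          (.of_forall fun v => (hψ.norm_sub_le u v).trans ?_)
        gcongr
        exact norm_sub_le u v
    _ = L * (‖u‖ + ∫ v, ‖v‖ ∂ν) := by
        rw [integral_const_mul, integral_add (integrable_const _) hν]
        simp

theorem abs_integral_tilted_sub_integral_tilted_le {μ : Measure X} [NeZero μ] {f g H : X → ℝ}
    {R : ℝ} (hψ : LipschitzWith L ψ) (hf : Integrable (fun u => Real.exp (f u)) μ)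
    (hg : Integrable (fun u => Real.exp (g u)) μ)
    (hf_norm : Integrable (fun u => ‖u‖) (μ.tilted f))
    (hg_norm : Integrable (fun u => ‖u‖) (μ.tilted g)) (hR : ∫ u, ‖u‖ ∂(μ.tilted g) ≤ R)
    (hfg : ∀ u, |Real.exp (f u) - Real.exp (g u)| ≤ H u)
    (hH : Integrable (fun u => H u * (‖u‖ + R)) μ) :
    |∫ u, ψ u ∂(μ.tilted f) - ∫ u, ψ u ∂(μ.tilted g)| ≤
      L * (∫ u, H u * (‖u‖ + R) ∂μ) / ∫ u, Real.exp (f u) ∂μ := by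
  have := isProbabilityMeasure_tilted hf
  have := isProbabilityMeasure_tilted hg
  rw [integral_tilted_sub_integral_tilted hf hg (integrable_of_lipschitzWith hψ hf_norm)
    (integrable_of_lipschitzWith hψ hg_norm), abs_div, abs_of_pos (integral_exp_pos hf),
    ← integral_const_mul]
  refine div_le_div_of_nonneg_right ?_ (integral_exp_pos hf).le
  rw [← Real.norm_eq_abs]
  refine norm_integral_le_of_norm_le (hH.const_mul L) (.of_forall fun u => ?_)
  calc ‖(Real.exp (f u) - Real.exp (g u)) * (ψ u - ∫ v, ψ v ∂(μ.tilted g))‖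
      ≤ H u * (L * (‖u‖ + ∫ v, ‖v‖ ∂(μ.tilted g))) := by
        rw [norm_mul]
        exact mul_le_mul (hfg u) (abs_sub_integral_le_of_lipschitzWith hψ hg_norm u)
          (norm_nonneg _) ((abs_nonneg _).trans (hfg u))
    _ ≤ H u * (L * (‖u‖ + R)) := by
        have := (abs_nonneg _).trans (hfg u)
        gcongr
    _ = L * (H u * (‖u‖ + R)) := mul_left_comm _ _ _

end Lipschitz

theorem exp_neg_le_of_sub_sq_le {X : Type*} [SeminormedAddCommGroup X] {Φ : X → ℝ} {M ε : ℝ} {u : X}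
    (hΦ : M - ε * ‖u‖ ^ 2 ≤ Φ u) :
    Real.exp (-Φ u) ≤ Real.exp (-M) * Real.exp (ε * ‖u‖ ^ 2) := by
  rw [← Real.exp_add]
  gcongr
  linarith

theorem abs_exp_neg_sub_exp_neg_le_of_sub_sq_le {X : Type*} [SeminormedAddCommGroup X]
    {Φ Ψ : X → ℝ} {M ε₁ ε₂ C d : ℝ} {u : X} (hΦ : M - ε₁ * ‖u‖ ^ 2 ≤ Φ u)
    (hΨ : M - ε₁ * ‖u‖ ^ 2 ≤ Ψ u) (hΦΨ : |Φ u - Ψ u| ≤ Real.exp (ε₂ * ‖u‖ ^ 2 + C) * d) :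
    |Real.exp (-Φ u) - Real.exp (-Ψ u)| ≤
      Real.exp (C - M) * d * Real.exp ((ε₁ + ε₂) * ‖u‖ ^ 2) := by
  calc |Real.exp (-Φ u) - Real.exp (-Ψ u)|
      ≤ Real.exp (-(M - ε₁ * ‖u‖ ^ 2)) * |Φ u - Ψ u| := abs_exp_neg_sub_exp_neg_le hΦ hΨ
    _ ≤ Real.exp (-(M - ε₁ * ‖u‖ ^ 2)) * (Real.exp (ε₂ * ‖u‖ ^ 2 + C) * d) := by gcongr
    _ = Real.exp (C - M) * d * Real.exp ((ε₁ + ε₂) * ‖u‖ ^ 2) := by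
        rw [mul_right_comm, ← mul_assoc, ← Real.exp_add, ← Real.exp_add]
        ring_nf

section Potential

variable {X : Type*} [SeminormedAddCommGroup X] [MeasurableSpace X] [OpensMeasurableSpace X]
  {μ : Measure X} {α β : ℝ}

theorem integrable_norm_pow_mul_exp_mul_norm_sq
    (hα : Integrable (fun u => Real.exp (α * ‖u‖ ^ 2)) μ) (hβ : β < α) (k : ℕ) :
    Integrable (fun u => ‖u‖ ^ k * Real.exp (β * ‖u‖ ^ 2)) μ := by
  have hlower : Integrable (fun u => Real.exp ((β - (α - β)) * ‖u‖ ^ 2)) μ := by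
    refine hα.mono' (by fun_prop) (.of_forall fun u => ?_)
    rw [Real.norm_eq_abs, Real.abs_exp]
    gcongr
    linarith
  have hmoment := ProbabilityTheory.integrable_rpow_abs_mul_exp_of_integrable_exp_mul
    (sub_pos.2 hβ).ne' (by simpa using hα) hlower (p := k / 2) (by positivity)
  refine hmoment.congr (.of_forall fun u => ?_)
  simp only [abs_of_nonneg (sq_nonneg ‖u‖), ← Real.rpow_natCast_mul (norm_nonneg u),
    Nat.cast_ofNat, mul_div_cancel₀ (k : ℝ) two_ne_zero, Real.rpow_natCast]

variable {ε₁ ε₂ M C : ℝ} {Φ Ψ : X → ℝ}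

theorem integrable_norm_pow_mul_exp_neg (hα : Integrable (fun u => Real.exp (α * ‖u‖ ^ 2)) μ)
    (hε₁ : ε₁ < α) (hΦ_meas : AEMeasurable Φ μ) (hΦ : ∀ u, M - ε₁ * ‖u‖ ^ 2 ≤ Φ u) (k : ℕ) :
    Integrable (fun u => ‖u‖ ^ k * Real.exp (-Φ u)) μ := by
  refine ((integrable_norm_pow_mul_exp_mul_norm_sq hα hε₁ k).const_mul (Real.exp (-M))).mono'
    (by fun_prop) (.of_forall fun u => ?_)
  rw [Real.norm_of_nonneg (by positivity), mul_left_comm]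
  gcongr
  exact exp_neg_le_of_sub_sq_le (hΦ u)

theorem integrable_exp_neg (hα : Integrable (fun u => Real.exp (α * ‖u‖ ^ 2)) μ) (hε₁ : ε₁ < α)
    (hΦ_meas : AEMeasurable Φ μ) (hΦ : ∀ u, M - ε₁ * ‖u‖ ^ 2 ≤ Φ u) :
    Integrable (fun u => Real.exp (-Φ u)) μ := by
  simpa using integrable_norm_pow_mul_exp_neg hα hε₁ hΦ_meas hΦ 0

theorem integrable_norm_tilted_neg (hα : Integrable (fun u => Real.exp (α * ‖u‖ ^ 2)) μ)
    (hε₁ : ε₁ < α) (hΦ_meas : AEMeasurable Φ μ) (hΦ : ∀ u, M - ε₁ * ‖u‖ ^ 2 ≤ Φ u) :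
    Integrable (fun u => ‖u‖) (μ.tilted fun u => -Φ u) := by
  rw [integrable_tilted_iff (integrable_exp_neg hα hε₁ hΦ_meas hΦ)]
  simpa [mul_comm] using integrable_norm_pow_mul_exp_neg hα hε₁ hΦ_meas hΦ 1

theorem integral_norm_tilted_neg_le (hα : Integrable (fun u => Real.exp (α * ‖u‖ ^ 2)) μ)
    (hε₁ : ε₁ < α) (hΦ : ∀ u, M - ε₁ * ‖u‖ ^ 2 ≤ Φ u)
    {z : ℝ} (hz : 0 < z) (hzΦ : z ≤ ∫ u, Real.exp (-Φ u) ∂μ) :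
    ∫ u, ‖u‖ ∂(μ.tilted fun u => -Φ u) ≤
      Real.exp (-M) * (∫ u, ‖u‖ * Real.exp (ε₁ * ‖u‖ ^ 2) ∂μ) / z := by
  rw [integral_tilted_eq_div, ← integral_const_mul]
  have hmoment := (integrable_norm_pow_mul_exp_mul_norm_sq hα hε₁ 1).const_mul (Real.exp (-M))
  simp only [pow_one] at hmoment
  refine div_le_div₀ (by positivity) ?_ hz hzΦ
  refine integral_mono_of_nonneg (.of_forall fun u => by positivity) hmoment
    (.of_forall fun u => ?_)
  calc Real.exp (-Φ u) * ‖u‖ ≤ Real.exp (-M) * Real.exp (ε₁ * ‖u‖ ^ 2) * ‖u‖ := by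
        gcongr
        exact exp_neg_le_of_sub_sq_le (hΦ u)
    _ = Real.exp (-M) * (‖u‖ * Real.exp (ε₁ * ‖u‖ ^ 2)) := by ring

/-- A Lipschitz constant in the 1-Wasserstein distance, over all potentials bounded below by
`M - ε₁ ‖u‖²` with normalizing constant at least `z`, when potentials are compared in the weighted
supremum norm with weight `exp (ε₂ ‖u‖² + C)`. The inner fraction bounds the first moments of the
posteriors. -/
noncomputable def posteriorLipschitzConst (μ : Measure X) (ε₁ ε₂ M C z : ℝ) : ℝ :=
  Real.exp (C - M) * (∫ u, Real.exp ((ε₁ + ε₂) * ‖u‖ ^ 2) *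
    (‖u‖ + Real.exp (-M) * (∫ v, ‖v‖ * Real.exp (ε₁ * ‖v‖ ^ 2) ∂μ) / z) ∂μ) / z

theorem abs_integral_posterior_sub_integral_posterior_le [NeZero μ]
    (hα : Integrable (fun u => Real.exp (α * ‖u‖ ^ 2)) μ) (hε₁ : ε₁ < α) (hε : ε₁ + ε₂ < α)
    (hΦ_meas : AEMeasurable Φ μ) (hΨ_meas : AEMeasurable Ψ μ)
    (hΦ : ∀ u, M - ε₁ * ‖u‖ ^ 2 ≤ Φ u) (hΨ : ∀ u, M - ε₁ * ‖u‖ ^ 2 ≤ Ψ u)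
    {d : ℝ} (hΦΨ : ∀ u, |Φ u - Ψ u| ≤ Real.exp (ε₂ * ‖u‖ ^ 2 + C) * d)
    {z : ℝ} (hz : 0 < z) (hzΦ : z ≤ ∫ u, Real.exp (-Φ u) ∂μ)
    (hzΨ : z ≤ ∫ u, Real.exp (-Ψ u) ∂μ) {ψ : X → ℝ} {L : NNReal} (hψ : LipschitzWith L ψ) :
    |∫ u, ψ u ∂(posterior μ Φ) - ∫ u, ψ u ∂(posterior μ Ψ)| ≤
      L * posteriorLipschitzConst μ ε₁ ε₂ M C z * d := by
  set R := Real.exp (-M) * (∫ v, ‖v‖ * Real.exp (ε₁ * ‖v‖ ^ 2) ∂μ) / z with hR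
  have hd : 0 ≤ d := nonneg_of_mul_nonneg_right ((abs_nonneg _).trans (hΦΨ 0)) (Real.exp_pos _)
  have hweight : Integrable (fun u => Real.exp ((ε₁ + ε₂) * ‖u‖ ^ 2) * (‖u‖ + R)) μ := by
    have hweight_pow := integrable_norm_pow_mul_exp_mul_norm_sq hα hε
    refine ((hweight_pow 1).add ((hweight_pow 0).const_mul R)).congr (.of_forall fun u => ?_)
    simp only [Pi.add_apply]
    ring
  have hΦ_exp := integrable_exp_neg hα hε₁ hΦ_meas hΦ
  have hΨ_exp := integrable_exp_neg hα hε₁ hΨ_meas hΨ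
  rw [posterior_eq_tilted hΦ_exp, posterior_eq_tilted hΨ_exp]
  calc |∫ u, ψ u ∂(μ.tilted fun u => -Φ u) - ∫ u, ψ u ∂(μ.tilted fun u => -Ψ u)|
      ≤ L * (∫ u, Real.exp (C - M) * d * Real.exp ((ε₁ + ε₂) * ‖u‖ ^ 2) * (‖u‖ + R) ∂μ) /
          ∫ u, Real.exp (-Φ u) ∂μ :=
        abs_integral_tilted_sub_integral_tilted_le hψ hΦ_exp hΨ_exp
          (integrable_norm_tilted_neg hα hε₁ hΦ_meas hΦ)
          (integrable_norm_tilted_neg hα hε₁ hΨ_meas hΨ)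
          (integral_norm_tilted_neg_le hα hε₁ hΨ hz hzΨ)
          (fun u => abs_exp_neg_sub_exp_neg_le_of_sub_sq_le (hΦ u) (hΨ u) (hΦΨ u))
          (by simpa only [mul_assoc] using hweight.const_mul (Real.exp (C - M) * d))
    _ ≤ L * (∫ u, Real.exp (C - M) * d * Real.exp ((ε₁ + ε₂) * ‖u‖ ^ 2) * (‖u‖ + R) ∂μ) / z := by
        gcongr
    _ = L * posteriorLipschitzConst μ ε₁ ε₂ M C z * d := by
        simp_rw [mul_assoc (Real.exp (C - M) * d), integral_const_mul, posteriorLipschitzConst, hR]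
        ring

end Potential

theorem exists_pos_forall_le_integral_exp_neg {X ι : Type*} [MeasurableSpace X] {μ : Measure X}
    [NeZero μ] {s : Set ι} (hs : s.Nonempty) {Φ : ι → X → ℝ} {B : X → ℝ} (hB : AEMeasurable B μ)
    (hΦ : ∀ i ∈ s, Integrable (fun u => Real.exp (-Φ i u)) μ) (hΦB : ∀ i ∈ s, ∀ u, Φ i u ≤ B u) :
    ∃ z : ℝ, 0 < z ∧ ∀ i ∈ s, z ≤ ∫ u, Real.exp (-Φ i u) ∂μ := by
  have hexp_le : ∀ i ∈ s, ∀ u, Real.exp (-B u) ≤ Real.exp (-Φ i u) := fun i hi u =>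
    Real.exp_le_exp.2 (neg_le_neg (hΦB i hi u))
  obtain ⟨i₀, hi₀⟩ := hs
  have hB_exp : Integrable (fun u => Real.exp (-B u)) μ :=
    (hΦ i₀ hi₀).mono' (by fun_prop) (.of_forall fun u => by simpa using hΦB i₀ hi₀ u)
  exact ⟨∫ u, Real.exp (-B u) ∂μ, integral_exp_pos hB_exp,
    fun i hi => integral_mono hB_exp (hΦ i hi) (hexp_le i hi)⟩

theorem stmt3_general {X Y : Type*} [SeminormedAddCommGroup X] [MeasurableSpace X]
    [OpensMeasurableSpace X] [SeminormedAddCommGroup Y] {Φ : X → Y → ℝ} {μ0 : Measure X} [NeZero μ0]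
    {α ε₁ ε₂ : ℝ} (hε₁ : ε₁ < α) (hε : ε₁ + ε₂ < α)
    (hint : Integrable (fun u => Real.exp (α * ‖u‖ ^ 2)) μ0)
    (hmeas : ∀ y : Y, AEMeasurable (fun u => Φ u y) μ0)
    (hi : ∀ r : ℝ, 0 < r → ∃ M : ℝ, ∀ (u : X) (y : Y), ‖y‖ < r → M - ε₁ * ‖u‖ ^ 2 ≤ Φ u y)
    (hiv : ∀ r : ℝ, 0 < r → ∃ C : ℝ, ∀ (u : X) (y y' : Y), ‖y‖ < r → ‖y'‖ < r →
      |Φ u y - Φ u y'| ≤ Real.exp (ε₂ * ‖u‖ ^ 2 + C) * ‖y - y'‖) :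
    ∀ r : ℝ, 0 < r → ∃ C : ℝ, 0 < C ∧ ∀ y y' : Y, ‖y‖ < r → ‖y'‖ < r →
      ∀ (L : NNReal) (ψ : X → ℝ), LipschitzWith L ψ →
        |(∫ u, ψ u ∂(posterior μ0 fun u => Φ u y)) -
            ∫ u, ψ u ∂(posterior μ0 fun u => Φ u y')| ≤ L * C * ‖y - y'‖ := by
  intro r hr
  obtain ⟨M, hM⟩ := hi r hr
  obtain ⟨C, hC⟩ := hiv r hr
  have hzero : ‖(0 : Y)‖ < r := by simpa using hr
  have hΦ_le (y : Y) (hy : ‖y‖ < r) (u : X) :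
      Φ u y ≤ Φ u 0 + Real.exp (ε₂ * ‖u‖ ^ 2 + C) * r := by
    have hdist := (le_abs_self _).trans (hC u y 0 hy hzero)
    rw [sub_zero] at hdist
    have : Real.exp (ε₂ * ‖u‖ ^ 2 + C) * ‖y‖ ≤ Real.exp (ε₂ * ‖u‖ ^ 2 + C) * r := by gcongr
    linarith
  obtain ⟨z, hz, hz_le⟩ := exists_pos_forall_le_integral_exp_neg (s := {y : Y | ‖y‖ < r})
    (Φ := fun y u => Φ u y) ⟨0, hzero⟩ (by have := hmeas 0; fun_prop)
    (fun y hy => integrable_exp_neg hint hε₁ (hmeas y) fun u => hM u y hy) hΦ_le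
  refine ⟨max (posteriorLipschitzConst μ0 ε₁ ε₂ M C z) 1, lt_max_of_lt_right one_pos,
    fun y y' hy hy' L ψ hψ => ?_⟩
  refine (abs_integral_posterior_sub_integral_posterior_le hint hε₁ hε (hmeas y) (hmeas y')
    (fun u => hM u y hy) (fun u => hM u y' hy') (fun u => hC u y y' hy hy') hz (hz_le y hy)
    (hz_le y' hy') hψ).trans ?_
  gcongr
  exact le_max_left _ _

theorem stmt3 {X Y : Type*} [NormedAddCommGroup X] [NormedSpace ℝ X] [CompleteSpace X]
    [TopologicalSpace.SeparableSpace X] [MeasurableSpace X] [BorelSpace X]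
    [NormedAddCommGroup Y] [NormedSpace ℝ Y] [CompleteSpace Y]
    (Φ : X → Y → ℝ)
    (hmeas : ∀ y : Y, Measurable fun u => Φ u y)
    -- condition (i)
    (hi : ∀ ε r : ℝ, 0 < ε → 0 < r → ∃ M : ℝ, ∀ (u : X) (y : Y), ‖y‖ < r →
      M - ε * ‖u‖ ^ 2 ≤ Φ u y)
    -- condition (ii)
    (hii : ∀ r : ℝ, 0 < r → ∃ K : ℝ, 0 < K ∧ ∀ (u : X) (y : Y), ‖u‖ < r → ‖y‖ < r →
      Φ u y ≤ K)
    -- condition (iv)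
    (hiv : ∀ ε r : ℝ, 0 < ε → 0 < r → ∃ C : ℝ, ∀ (u : X) (y y' : Y), ‖y‖ < r → ‖y'‖ < r →
      |Φ u y - Φ u y'| ≤ Real.exp (ε * ‖u‖ ^ 2 + C) * ‖y - y'‖)
    (μ0 : Measure X) [IsProbabilityMeasure μ0]
    (α : ℝ) (hα : 0 < α)
    (hint : Integrable (fun u => Real.exp (α * ‖u‖ ^ 2)) μ0)
    (hball : ∀ (x : X) (r : ℝ), 0 < r → 0 < μ0 (Metric.ball x r)) :
    ∀ r : ℝ, 0 < r → ∃ C : ℝ, 0 < C ∧ ∀ y y' : Y, ‖y‖ < r → ‖y'‖ < r →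
      ∀ ψ : X → ℝ, Continuous ψ → (∃ B : ℝ, ∀ x, |ψ x| ≤ B) → LipschitzWith 1 ψ →
        |(∫ u, ψ u ∂(posterior μ0 fun u => Φ u y)) -
            ∫ u, ψ u ∂(posterior μ0 fun u => Φ u y')| ≤ C * ‖y - y'‖ := by
  have hα4 : 0 < α / 4 := by positivity
  intro r hr
  obtain ⟨C, hC, hlip⟩ := stmt3_general (ε₁ := α / 4) (ε₂ := α / 4) (by linarith) (by linarith)
    hint (fun y => (hmeas y).aemeasurable) (hi _ · hα4) (hiv _ · hα4) r hr
  exact ⟨C, hC, fun y y' hy hy' ψ _ _ hψ => by simpa using hlip y y' hy hy' 1 ψ hψ⟩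
end

section
/- Let X be a separable Banach space and let μ0 be a Borel probability measure on X such that there exists α > 0 with ∫_X exp(α‖u‖_X²) dμ0(u) < ∞ and such that μ0 assigns positive mass to every open ball of X. Let Φ : X → ℝ and, for each N ∈ ℕ, Φ^N : X → ℝ be Borel measurable and satisfy, with constants uniform in N: (i') for every ε > 0 there is M = M(ε) ∈ ℝ with Φ(u) ≥ M − ε‖u‖_X² and Φ^N(u) ≥ M − ε‖u‖_X² for all u ∈ X; (ii') for every r > 0 there is K = K(r) > 0 with Φ(u) ≤ K and Φ^N(u) ≤ K whenever ‖u‖_X < r. Assume moreover that for every R > 0 there is K = K(R) > 0 such that |Φ(u) − Φ^N(u)| ≤ K Ψ(N) for all u ∈ X with ‖u‖_X ≤ R and all N, where Ψ(N) → 0 as N → ∞. Let μ and μ^N be the probability measures with densities exp(−Φ(u))/Z and exp(−Φ^N(u))/Z^N with respect to μ0, where Z = ∫_X exp(−Φ) dμ0 and Z^N = ∫_X exp(−Φ^N) dμ0. Then W1(μ, μ^N) → 0 as N → ∞, i.e., the supremum over all bounded continuous ψ : X → ℝ with Lipschitz constant at most 1 of |∫_X ψ dμ − ∫_X ψ dμ^N|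 tends to 0 as N → ∞. -/
/-!
Two measures of equal mass do not distinguish `ψ` from `ψ - ψ x₀`, and a `1`-Lipschitz `ψ` satisfies
`|ψ u - ψ x₀| ≤ dist u x₀`. Their Kantorovich distance is therefore at most the `L¹` distance of
their densities weighted by `dist u x₀`. The lower bound on the potentials dominates the densities
by a multiple of `exp (ε * dist u x₀ ^ 2)`. For `ε < α` this remains integrable after multiplication
by `dist u x₀`, so dominated convergence applies both to the normalizing constants and to the
weighted `L¹` distances.
-/

open MeasureTheory Filter

open scoped Topology

section Densities

variable {X E : Type*} [MeasurableSpace X] {μ : Measure X} [NormedAddCommGroup E]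

lemma integrable_of_dominated_of_tendsto {F : ℕ → X → E} {f : X → E} {bound : X → ℝ}
    (hF : ∀ n, AEStronglyMeasurable (F n) μ) (hbound : Integrable bound μ)
    (hle : ∀ n, ∀ᵐ u ∂μ, ‖F n u‖ ≤ bound u)
    (hlim : ∀ᵐ u ∂μ, Tendsto (fun n => F n u) atTop (𝓝 (f u))) :
    Integrable f μ :=
  ⟨aestronglyMeasurable_of_tendsto_ae atTop hF hlim,
    hasFiniteIntegral_of_dominated_convergence hbound.hasFiniteIntegral hle hlim⟩

lemma tendsto_integral_norm_sub_of_dominated {F : ℕ → X → E} {f : X → E} {bound : X → ℝ}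
    (hF : ∀ n, AEStronglyMeasurable (F n) μ) (hbound : Integrable bound μ)
    (hle : ∀ n, ∀ᵐ u ∂μ, ‖F n u‖ ≤ bound u)
    (hlim : ∀ᵐ u ∂μ, Tendsto (fun n => F n u) atTop (𝓝 (f u))) :
    Tendsto (fun n => ∫ u, ‖f u - F n u‖ ∂μ) atTop (𝓝 0) := by
  have hf : Integrable f μ := integrable_of_dominated_of_tendsto hF hbound hle hlim
  rw [← integral_zero X ℝ (μ := μ)]
  refine tendsto_integral_of_dominated_convergence (fun u => ‖f u‖ + bound u)
    (fun n => (hf.aestronglyMeasurable.sub (hF n)).norm) (hf.norm.add hbound) (fun n => ?_) ?_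
  · filter_upwards [hle n] with u hu
    rw [norm_norm]
    exact (norm_sub_le _ _).trans (by gcongr)
  · filter_upwards [hlim] with u hu
    simpa only [sub_self, norm_zero] using (hu.const_sub (f u)).norm

lemma integral_withDensity_ofReal [NormedSpace ℝ E] {p : X → ℝ} (hp : AEMeasurable p μ)
    (hp0 : 0 ≤ᵐ[μ] p) (ψ : X → E) :
    ∫ u, ψ u ∂μ.withDensity (fun u => ENNReal.ofReal (p u)) = ∫ u, p u • ψ u ∂μ := by
  rw [integral_withDensity_eq_integral_toReal_smul₀ hp.ennreal_ofReal
    (ae_of_all _ fun _ => ENNReal.ofReal_lt_top)]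
  refine integral_congr_ae ?_
  filter_upwards [hp0] with u hu
  rw [ENNReal.toReal_ofReal hu]

lemma integral_mul_sub_integral_mul_eq {p q ψ : X → ℝ} (hp : Integrable p μ) (hq : Integrable q μ)
    (hmass : ∫ u, p u ∂μ = ∫ u, q u ∂μ) (hpψ : Integrable (fun u => p u * ψ u) μ)
    (hqψ : Integrable (fun u => q u * ψ u) μ) (c : ℝ) :
    ∫ u, p u * ψ u ∂μ - ∫ u, q u * ψ u ∂μ = ∫ u, (p u - q u) * (ψ u - c) ∂μ := by
  have hcentred : ∫ u, (p u - q u) * c ∂μ = 0 := by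
    rw [integral_mul_const, integral_sub hp hq, hmass, sub_self, zero_mul]
  calc ∫ u, p u * ψ u ∂μ - ∫ u, q u * ψ u ∂μ
      = ∫ u, (p u * ψ u - q u * ψ u) ∂μ - ∫ u, (p u - q u) * c ∂μ := by
        rw [hcentred, sub_zero, integral_sub hpψ hqψ]
    _ = ∫ u, ((p u * ψ u - q u * ψ u) - (p u - q u) * c) ∂μ :=
        (integral_sub (hpψ.sub hqψ) ((hp.sub hq).mul_const c)).symm
    _ = ∫ u, (p u - q u) * (ψ u - c) ∂μ :=
        integral_congr_ae (ae_of_all _ fun u => by ring)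

end Densities

section Kantorovich

variable {X : Type*} [PseudoMetricSpace X] [MeasurableSpace X]

/-- The `1`-Wasserstein distance of two measures of equal mass, in Kantorovich dual form. The test
functions are bounded, so that their integrals against finite measures are never junk values; the
real supremum `sSup` is `0` when the set of values is unbounded. -/
noncomputable def kantorovichDist (μ ν : Measure X) : ℝ :=
  sSup {s : ℝ | ∃ ψ : X → ℝ, Continuous ψ ∧ (∃ B : ℝ, ∀ x, |ψ x| ≤ B) ∧
    LipschitzWith 1 ψ ∧ s = |(∫ u, ψ u ∂μ) - ∫ u, ψ u ∂ν|}

lemma kantorovichDist_nonneg (μ ν : Measure X) : 0 ≤ kantorovichDist μ ν := by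
  refine Real.sSup_nonneg ?_
  rintro s ⟨ψ, -, -, -, rfl⟩
  exact abs_nonneg _

variable [OpensMeasurableSpace X] {μ : Measure X}

lemma kantorovichDist_withDensity_le {p q : X → ℝ} (x₀ : X) (hp : Integrable p μ)
    (hq : Integrable q μ) (hp0 : 0 ≤ᵐ[μ] p) (hq0 : 0 ≤ᵐ[μ] q)
    (hmass : ∫ u, p u ∂μ = ∫ u, q u ∂μ)
    (hdist : Integrable (fun u => dist u x₀ * |p u - q u|) μ) :
    kantorovichDist (μ.withDensity fun u => ENNReal.ofReal (p u))
        (μ.withDensity fun u => ENNReal.ofReal (q u)) ≤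
      ∫ u, dist u x₀ * |p u - q u| ∂μ := by
  refine Real.sSup_le ?_ (integral_nonneg fun u => by positivity)
  rintro s ⟨ψ, hψ, ⟨B, hB⟩, hlip, rfl⟩
  have hψm : AEStronglyMeasurable ψ μ := hψ.aestronglyMeasurable
  simp only [integral_withDensity_ofReal hp.aemeasurable hp0,
    integral_withDensity_ofReal hq.aemeasurable hq0, smul_eq_mul]
  rw [integral_mul_sub_integral_mul_eq hp hq hmass (hp.mul_bdd hψm (ae_of_all _ hB))
      (hq.mul_bdd hψm (ae_of_all _ hB)) (ψ x₀), ← Real.norm_eq_abs]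
  refine norm_integral_le_of_norm_le hdist (ae_of_all _ fun u => ?_)
  rw [norm_mul, Real.norm_eq_abs, Real.norm_eq_abs, mul_comm, ← Real.dist_eq (ψ u)]
  gcongr
  simpa only [NNReal.coe_one, one_mul] using hlip.dist_le_mul u x₀

lemma tendsto_kantorovichDist_withDensity_of_dominated {P : ℕ → X → ℝ} {p bound : X → ℝ} (x₀ : X)
    (hP : ∀ n, AEStronglyMeasurable (P n) μ) (hP0 : ∀ n, 0 ≤ᵐ[μ] P n)
    (hbound : Integrable bound μ) (hdist : Integrable (fun u => dist u x₀ * bound u) μ)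
    (hle : ∀ n, ∀ᵐ u ∂μ, P n u ≤ bound u)
    (hlim : ∀ᵐ u ∂μ, Tendsto (fun n => P n u) atTop (𝓝 (p u)))
    (hmass : ∀ n, ∫ u, p u ∂μ = ∫ u, P n u ∂μ) :
    Tendsto (fun n => kantorovichDist (μ.withDensity fun u => ENNReal.ofReal (p u))
      (μ.withDensity fun u => ENNReal.ofReal (P n u))) atTop (𝓝 0) := by
  have hnorm : ∀ n, ∀ᵐ u ∂μ, ‖P n u‖ ≤ bound u := fun n => by
    filter_upwards [hP0 n, hle n] with u h0 hu
    rwa [Real.norm_of_nonneg h0]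
  have hp : Integrable p μ := integrable_of_dominated_of_tendsto hP hbound hnorm hlim
  have hp0 : 0 ≤ᵐ[μ] p := by
    filter_upwards [hlim, ae_all_iff.2 hP0] with u hu h0
    exact ge_of_tendsto' hu h0
  have hdistm : AEStronglyMeasurable (fun u => dist u x₀) μ :=
    (continuous_id.dist continuous_const).aestronglyMeasurable
  have hdP : ∀ n, AEStronglyMeasurable (fun u => dist u x₀ * P n u) μ := fun n => hdistm.mul (hP n)
  have hdle : ∀ n, ∀ᵐ u ∂μ, ‖dist u x₀ * P n u‖ ≤ dist u x₀ * bound u := fun n => by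
    filter_upwards [hnorm n] with u hu
    rw [norm_mul, Real.norm_of_nonneg dist_nonneg]
    gcongr
  have hdlim : ∀ᵐ u ∂μ, Tendsto (fun n => dist u x₀ * P n u) atTop (𝓝 (dist u x₀ * p u)) := by
    filter_upwards [hlim] with u hu using hu.const_mul _
  have hweight : ∀ n u, ‖dist u x₀ * p u - dist u x₀ * P n u‖ = dist u x₀ * |p u - P n u| :=
    fun n u => by rw [← mul_sub, norm_mul, Real.norm_of_nonneg dist_nonneg, Real.norm_eq_abs]
  have hdp := integrable_of_dominated_of_tendsto hdP hdist hdle hdlim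
  refine squeeze_zero (fun n => kantorovichDist_nonneg _ _)
    (fun n => kantorovichDist_withDensity_le x₀ hp (hbound.mono' (hP n) (hnorm n)) hp0 (hP0 n)
      (hmass n) ?_) ?_
  · simpa only [Pi.sub_apply, hweight] using (hdp.sub (hdist.mono' (hdP n) (hdle n))).norm
  · simpa only [hweight] using tendsto_integral_norm_sub_of_dominated hdP hdist hdle hdlim

theorem tendsto_kantorovichDist_tilted_of_dominated [NeZero μ] {F : ℕ → X → ℝ} {f bound : X → ℝ}
    (x₀ : X) (hF : ∀ n, AEMeasurable (F n) μ) (hbound : Integrable bound μ)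
    (hdist : Integrable (fun u => dist u x₀ * bound u) μ)
    (hle : ∀ n, ∀ᵐ u ∂μ, Real.exp (F n u) ≤ bound u)
    (hlim : ∀ᵐ u ∂μ, Tendsto (fun n => F n u) atTop (𝓝 (f u))) :
    Tendsto (fun n => kantorovichDist (μ.tilted f) (μ.tilted (F n))) atTop (𝓝 0) := by
  have hexpF : ∀ n, AEStronglyMeasurable (fun u => Real.exp (F n u)) μ :=
    fun n => (hF n).exp.aestronglyMeasurable
  have hnorm : ∀ n, ∀ᵐ u ∂μ, ‖Real.exp (F n u)‖ ≤ bound u := by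
    simpa only [Real.norm_of_nonneg (Real.exp_pos _).le] using hle
  have hexplim : ∀ᵐ u ∂μ, Tendsto (fun n => Real.exp (F n u)) atTop (𝓝 (Real.exp (f u))) := by
    filter_upwards [hlim] with u hu using hu.rexp
  have hpos : 0 < ∫ u, Real.exp (f u) ∂μ :=
    integral_exp_pos (integrable_of_dominated_of_tendsto hexpF hbound hnorm hexplim)
  have hposF : ∀ n, 0 < ∫ u, Real.exp (F n u) ∂μ :=
    fun n => integral_exp_pos (hbound.mono' (hexpF n) (hnorm n))
  have hZ : Tendsto (fun n => ∫ u, Real.exp (F n u) ∂μ) atTop (𝓝 (∫ u, Real.exp (f u) ∂μ)) :=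
    tendsto_integral_of_dominated_convergence bound hexpF hbound hnorm hexplim
  obtain ⟨b, hb⟩ := (hZ.inv₀ hpos.ne').bddAbove_range
  refine tendsto_kantorovichDist_withDensity_of_dominated x₀
    (fun n => ((hF n).exp.div_const _).aestronglyMeasurable)
    (fun n => ae_of_all _ fun u => div_nonneg (Real.exp_pos _).le (hposF n).le)
    (hbound.mul_const b) (by simpa only [mul_assoc] using hdist.mul_const b) (fun n => ?_) ?_
    (fun n => ?_)
  · filter_upwards [hle n] with u hu
    rw [div_eq_mul_inv]
    exact mul_le_mul hu (hb (Set.mem_range_self n)) (inv_nonneg.2 (hposF n).le)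
      ((Real.exp_pos _).le.trans hu)
  · filter_upwards [hexplim] with u hu using hu.div hZ hpos.ne'
  · rw [integral_div, integral_div, div_self hpos.ne', div_self (hposF n).ne']

end Kantorovich

section GaussianMoments

variable {X : Type*} [MeasurableSpace X] {μ : Measure X} {f : X → ℝ} {ε α : ℝ}

lemma integrable_exp_mul_sq_of_le (hf : AEMeasurable f μ) (hεα : ε ≤ α)
    (hint : Integrable (fun u => Real.exp (α * f u ^ 2)) μ) :
    Integrable (fun u => Real.exp (ε * f u ^ 2)) μ := by
  refine hint.mono' (by fun_prop) (ae_of_all _ fun u => ?_)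
  rw [Real.norm_of_nonneg (Real.exp_pos _).le]
  gcongr

lemma abs_le_exp_sq (x : ℝ) : |x| ≤ Real.exp (x ^ 2) := by
  have hexp := Real.add_one_le_exp (x ^ 2)
  nlinarith [sq_nonneg (|x| - 1), sq_abs x]

lemma integrable_mul_exp_mul_sq_of_lt (hf : AEMeasurable f μ) (hεα : ε < α)
    (hint : Integrable (fun u => Real.exp (α * f u ^ 2)) μ) :
    Integrable (fun u => f u * Real.exp (ε * f u ^ 2)) μ := by
  obtain ⟨c, hc, hcsq⟩ : ∃ c > 0, c ^ 2 = α - ε :=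
    ⟨√(α - ε), Real.sqrt_pos.2 (sub_pos.2 hεα), Real.sq_sqrt (sub_pos.2 hεα).le⟩
  refine (hint.const_mul c⁻¹).mono' (by fun_prop) (ae_of_all _ fun u => ?_)
  rw [norm_mul, Real.norm_eq_abs, Real.norm_of_nonneg (Real.exp_pos _).le]
  calc |f u| * Real.exp (ε * f u ^ 2)
      = c⁻¹ * (|c * f u| * Real.exp (ε * f u ^ 2)) := by
        rw [abs_mul, abs_of_pos hc]
        field_simp
    _ ≤ c⁻¹ * (Real.exp ((c * f u) ^ 2) * Real.exp (ε * f u ^ 2)) := by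
        gcongr
        exact abs_le_exp_sq _
    _ = c⁻¹ * Real.exp (α * f u ^ 2) := by
        rw [← Real.exp_add, mul_pow, hcsq]
        ring_nf

end GaussianMoments

lemma posterior_eq_tilted_s7 {X : Type*} [MeasurableSpace X] {μ0 : Measure X} {Φ : X → ℝ}
    (hΦ : AEMeasurable Φ μ0) : posterior μ0 Φ = μ0.tilted fun u => -Φ u := by
  by_cases hint : Integrable (fun u => Real.exp (-Φ u)) μ0
  · rcases eq_zero_or_neZero μ0 with rfl | _
    · simp [posterior]
    · simp only [posterior, Measure.tilted,
        ENNReal.ofReal_div_of_pos (integral_exp_pos hint),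
        ofReal_integral_eq_lintegral_ofReal hint (ae_of_all _ fun _ => (Real.exp_pos _).le)]
  · have htop : ∫⁻ u, ENNReal.ofReal (Real.exp (-Φ u)) ∂μ0 = ⊤ := by
      by_contra hfin
      exact hint ((lintegral_ofReal_ne_top_iff_integrable hΦ.neg.exp.aestronglyMeasurable
        (ae_of_all _ fun _ => (Real.exp_pos _).le)).1 hfin)
    rw [tilted_of_not_integrable hint]
    simp [posterior, htop]

lemma tendsto_of_exists_abs_sub_le_mul {ι : Type*} {l : Filter ι} {a : ℝ} {x ψ : ι → ℝ}
    (hψ : Tendsto ψ l (𝓝 0)) (h : ∃ K, ∀ i, |a - x i| ≤ K * ψ i) : Tendsto x l (𝓝 a) := by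
  obtain ⟨K, hK⟩ := h
  refine tendsto_iff_dist_tendsto_zero.2 (squeeze_zero (fun _ => dist_nonneg) (fun i => ?_)
    (by simpa only [mul_zero] using hψ.const_mul K))
  rw [dist_comm, Real.dist_eq]
  exact hK i

theorem stmt7_general {X : Type*} [PseudoMetricSpace X] [MeasurableSpace X]
    [OpensMeasurableSpace X] {μ0 : Measure X} [NeZero μ0] (x₀ : X) {ε α M : ℝ} (hεα : ε < α)
    (hint : Integrable (fun u => Real.exp (α * dist u x₀ ^ 2)) μ0)
    {Φ : X → ℝ} {ΦN : ℕ → X → ℝ} (hmeasN : ∀ N, AEMeasurable (ΦN N) μ0)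
    (hlower : ∀ N, ∀ᵐ u ∂μ0, M - ε * dist u x₀ ^ 2 ≤ ΦN N u)
    (hlim : ∀ᵐ u ∂μ0, Tendsto (fun N => ΦN N u) atTop (𝓝 (Φ u))) :
    Tendsto (fun N => kantorovichDist (posterior μ0 Φ) (posterior μ0 (ΦN N))) atTop (𝓝 0) := by
  have hdist : AEMeasurable (fun u => dist u x₀) μ0 :=
    (continuous_id.dist continuous_const).aemeasurable
  have hle : ∀ N, ∀ᵐ u ∂μ0,
      Real.exp (-ΦN N u) ≤ Real.exp (ε * dist u x₀ ^ 2) * Real.exp (-M) := fun N => by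
    filter_upwards [hlower N] with u hu
    rw [← Real.exp_add]
    gcongr
    linarith
  simp only [posterior_eq_tilted_s7 (aemeasurable_of_tendsto_metrizable_ae atTop hmeasN hlim),
    posterior_eq_tilted_s7 (hmeasN _)]
  exact tendsto_kantorovichDist_tilted_of_dominated x₀ (fun N => (hmeasN N).neg)
    ((integrable_exp_mul_sq_of_le hdist hεα.le hint).mul_const _)
    (by simpa only [mul_assoc] using
      (integrable_mul_exp_mul_sq_of_lt hdist hεα hint).mul_const (Real.exp (-M)))
    hle (by filter_upwards [hlim] with u hu using hu.neg)

theorem stmt7 {X : Type*} [NormedAddCommGroup X] [NormedSpace ℝ X] [CompleteSpace X]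
    [TopologicalSpace.SeparableSpace X] [MeasurableSpace X] [BorelSpace X]
    (μ0 : Measure X) [IsProbabilityMeasure μ0]
    (α : ℝ) (hα : 0 < α)
    (hint : Integrable (fun u => Real.exp (α * ‖u‖ ^ 2)) μ0)
    (hball : ∀ (x : X) (r : ℝ), 0 < r → 0 < μ0 (Metric.ball x r))
    (Φ : X → ℝ) (ΦN : ℕ → X → ℝ)
    (hmeas : Measurable Φ) (hmeasN : ∀ N, Measurable (ΦN N))
    -- condition (i'), with constants uniform in N
    (hi : ∀ ε : ℝ, 0 < ε → ∃ M : ℝ, ∀ u : X,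
      (M - ε * ‖u‖ ^ 2 ≤ Φ u) ∧ ∀ N : ℕ, M - ε * ‖u‖ ^ 2 ≤ ΦN N u)
    -- condition (ii'), with constants uniform in N
    (hii : ∀ r : ℝ, 0 < r → ∃ K : ℝ, 0 < K ∧ ∀ u : X, ‖u‖ < r →
      (Φ u ≤ K) ∧ ∀ N : ℕ, ΦN N u ≤ K)
    (Ψ : ℕ → ℝ) (hΨ : Tendsto Ψ atTop (nhds 0))
    -- approximation property on balls
    (happrox : ∀ R : ℝ, 0 < R → ∃ K : ℝ, 0 < K ∧ ∀ (u : X) (N : ℕ), ‖u‖ ≤ R →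
      |Φ u - ΦN N u| ≤ K * Ψ N) :
    Tendsto (fun N : ℕ =>
        sSup {s : ℝ | ∃ ψ : X → ℝ, Continuous ψ ∧ (∃ B : ℝ, ∀ x, |ψ x| ≤ B) ∧
          LipschitzWith 1 ψ ∧
          s = |(∫ u, ψ u ∂(posterior μ0 Φ)) - ∫ u, ψ u ∂(posterior μ0 (ΦN N))|})
      atTop (nhds 0) := by
  obtain ⟨M, hM⟩ := hi (α / 2) (half_pos hα)
  exact stmt7_general (M := M) 0 (half_lt_self hα) (by simpa only [dist_zero_right] using hint)
    (fun N => (hmeasN N).aemeasurable)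
    (fun N => ae_of_all _ fun u => by simpa only [dist_zero_right] using (hM u).2 N)
    (ae_of_all _ fun u => tendsto_of_exists_abs_sub_le_mul hΨ <|
      (happrox (‖u‖ + 1) (by positivity)).imp fun _ hK N => hK.2 u N (by linarith))
end

section
/- Let X be a separable Banach space and Y a Banach space, let Φ : X × Y → ℝ satisfy conditions (i) and (iv), with Φ(·;y) Borel measurable for each y ∈ Y, and let μ0 be a Borel probability measure on X such that there exists α > 0 with ∫_X exp(α‖u‖_X²) dμ0(u) < ∞. Then the normalization constant Z(y) = ∫_X exp(−Φ(u;y)) dμ0(u) is locally Lipschitz in the data: for every r > 0 there exists C = C(r) > 0 such that |Z(y) − Z(y')| ≤ C‖y − y'‖_Y for all y, y' ∈ Y with ‖y‖_Y, ‖y'‖_Y < r. -/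
open MeasureTheory

/-! On `(-∞, m]` the exponential is Lipschitz with constant `exp m`. Taking `m = ε‖u‖² - M` from (i)
and the Lipschitz constant `exp (ε‖u‖² + C)` of `Φ(u; ·)` from (iv), the map `y ↦ exp (-Φ(u; y))` is
Lipschitz with constant `exp (C - M) * exp (2ε‖u‖²)`, which is integrable for `ε = α / 2`. -/

theorem abs_exp_sub_exp_le_exp_mul {a b m : ℝ} (ha : a ≤ m) (hb : b ≤ m) :
    |Real.exp a - Real.exp b| ≤ Real.exp m * |a - b| :=
  (convex_Iic m).norm_image_sub_le_of_norm_hasDerivWithin_le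
    (fun x _ => (Real.hasDerivAt_exp x).hasDerivWithinAt)
    (fun x hx => by simpa only [Real.norm_eq_abs, Real.abs_exp] using Real.exp_le_exp.mpr hx) hb ha

section Integral

variable {X : Type*} [MeasurableSpace X] {μ : Measure X} {f g h L : X → ℝ}

theorem integrable_exp_of_ae_le (hh : Integrable (fun u => Real.exp (h u)) μ)
    (hf : AEMeasurable f μ) (hfh : f ≤ᵐ[μ] h) : Integrable (fun u => Real.exp (f u)) μ :=
  hh.mono' hf.exp.aestronglyMeasurable <| hfh.mono fun u hu => by
    simpa only [Real.norm_eq_abs, Real.abs_exp] using Real.exp_le_exp.mpr hu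

theorem abs_integral_exp_sub_integral_exp_le (hh : Integrable (fun u => Real.exp (h u)) μ)
    (hhL : Integrable (fun u => Real.exp (h u) * L u) μ)
    (hf : AEMeasurable f μ) (hg : AEMeasurable g μ) (hfh : f ≤ᵐ[μ] h) (hgh : g ≤ᵐ[μ] h)
    (hfg : ∀ᵐ u ∂μ, |f u - g u| ≤ L u) :
    |(∫ u, Real.exp (f u) ∂μ) - ∫ u, Real.exp (g u) ∂μ| ≤ ∫ u, Real.exp (h u) * L u ∂μ := by
  rw [← integral_sub (integrable_exp_of_ae_le hh hf hfh) (integrable_exp_of_ae_le hh hg hgh),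
    ← Real.norm_eq_abs]
  refine norm_integral_le_of_norm_le hhL ?_
  filter_upwards [hfh, hgh, hfg] with u hfu hgu hfgu
  calc |Real.exp (f u) - Real.exp (g u)|
      ≤ Real.exp (h u) * |f u - g u| := abs_exp_sub_exp_le_exp_mul hfu hgu
    _ ≤ Real.exp (h u) * L u := by gcongr

theorem abs_integral_exp_neg_sub_integral_exp_neg_le [IsFiniteMeasure μ] {V : X → ℝ}
    {α β M C d : ℝ} (hα : 0 ≤ α) (hβ : 0 ≤ β)
    (hint : Integrable (fun u => Real.exp ((α + β) * V u)) μ)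
    (hf : AEMeasurable f μ) (hg : AEMeasurable g μ)
    (hMf : ∀ᵐ u ∂μ, M - α * V u ≤ f u) (hMg : ∀ᵐ u ∂μ, M - α * V u ≤ g u)
    (hfg : ∀ᵐ u ∂μ, |f u - g u| ≤ Real.exp (β * V u + C) * d) :
    |(∫ u, Real.exp (-f u) ∂μ) - ∫ u, Real.exp (-g u) ∂μ| ≤
      Real.exp (C - M) * (∫ u, Real.exp ((α + β) * V u) ∂μ) * d := by
  have hexp : Integrable (fun u => Real.exp (α * V u - M)) μ := by
    simpa only [Real.exp_sub] using
      (ProbabilityTheory.integrable_exp_mul_of_nonneg_of_le hint hα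
        (le_add_of_nonneg_right hβ)).div_const (Real.exp M)
  have hfactor (u) : Real.exp (α * V u - M) * (Real.exp (β * V u + C) * d) =
      Real.exp (C - M) * d * Real.exp ((α + β) * V u) := by
    rw [← mul_assoc, ← Real.exp_add, mul_right_comm, ← Real.exp_add]
    ring_nf
  have hbound : Integrable
      (fun u => Real.exp (α * V u - M) * (Real.exp (β * V u + C) * d)) μ := by
    simpa only [hfactor] using hint.const_mul _
  calc |(∫ u, Real.exp (-f u) ∂μ) - ∫ u, Real.exp (-g u) ∂μ|
      ≤ ∫ u, Real.exp (α * V u - M) * (Real.exp (β * V u + C) * d) ∂μ :=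
        abs_integral_exp_sub_integral_exp_le hexp hbound hf.neg hg.neg
          (hMf.mono fun u hu => by simpa only [Pi.neg_apply, neg_sub] using neg_le_neg hu)
          (hMg.mono fun u hu => by simpa only [Pi.neg_apply, neg_sub] using neg_le_neg hu)
          (hfg.mono fun u hu => by
            simpa only [Pi.neg_apply, neg_sub_neg, abs_sub_comm] using hu)
    _ = Real.exp (C - M) * (∫ u, Real.exp ((α + β) * V u) ∂μ) * d := by
        simp only [hfactor, integral_const_mul, mul_right_comm]

end Integral

theorem stmt11_general {X Y : Type*} [MeasurableSpace X] [PseudoMetricSpace Y] {μ : Measure X}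
    [IsFiniteMeasure μ] {Φ : X → Y → ℝ} {V : X → ℝ} {s : Set Y} {α β : ℝ} (hα : 0 ≤ α) (hβ : 0 ≤ β)
    (hint : Integrable (fun u => Real.exp ((α + β) * V u)) μ)
    (hmeas : ∀ y ∈ s, AEMeasurable (fun u => Φ u y) μ)
    (hlower : ∃ M : ℝ, ∀ u, ∀ y ∈ s, M - α * V u ≤ Φ u y)
    (hlip : ∃ C : ℝ, ∀ u, ∀ y y', y ∈ s → y' ∈ s →
      |Φ u y - Φ u y'| ≤ Real.exp (β * V u + C) * dist y y') :
    ∃ C : ℝ, 0 < C ∧ ∀ y y', y ∈ s → y' ∈ s →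
      |(∫ u, Real.exp (-Φ u y) ∂μ) - ∫ u, Real.exp (-Φ u y') ∂μ| ≤ C * dist y y' := by
  obtain ⟨M, hM⟩ := hlower
  obtain ⟨C, hC⟩ := hlip
  refine ⟨Real.exp (C - M) * (∫ u, Real.exp ((α + β) * V u) ∂μ) + 1, by positivity,
    fun y y' hy hy' => ?_⟩
  calc |(∫ u, Real.exp (-Φ u y) ∂μ) - ∫ u, Real.exp (-Φ u y') ∂μ|
      ≤ Real.exp (C - M) * (∫ u, Real.exp ((α + β) * V u) ∂μ) * dist y y' :=
        abs_integral_exp_neg_sub_integral_exp_neg_le hα hβ hint (hmeas y hy) (hmeas y' hy')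
          (.of_forall fun u => hM u y hy) (.of_forall fun u => hM u y' hy')
          (.of_forall fun u => hC u y y' hy hy')
    _ ≤ (Real.exp (C - M) * (∫ u, Real.exp ((α + β) * V u) ∂μ) + 1) * dist y y' := by
        gcongr
        exact le_add_of_nonneg_right zero_le_one

theorem stmt11 {X Y : Type*} [NormedAddCommGroup X] [NormedSpace ℝ X] [CompleteSpace X]
    [TopologicalSpace.SeparableSpace X] [MeasurableSpace X] [BorelSpace X]
    [NormedAddCommGroup Y] [NormedSpace ℝ Y] [CompleteSpace Y]
    (Φ : X → Y → ℝ)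
    (hmeas : ∀ y : Y, Measurable fun u => Φ u y)
    -- condition (i)
    (hi : ∀ ε r : ℝ, 0 < ε → 0 < r → ∃ M : ℝ, ∀ (u : X) (y : Y), ‖y‖ < r →
      M - ε * ‖u‖ ^ 2 ≤ Φ u y)
    -- condition (iv)
    (hiv : ∀ ε r : ℝ, 0 < ε → 0 < r → ∃ C : ℝ, ∀ (u : X) (y y' : Y), ‖y‖ < r → ‖y'‖ < r →
      |Φ u y - Φ u y'| ≤ Real.exp (ε * ‖u‖ ^ 2 + C) * ‖y - y'‖)
    (μ0 : Measure X) [IsProbabilityMeasure μ0]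
    (α : ℝ) (hα : 0 < α)
    (hint : Integrable (fun u => Real.exp (α * ‖u‖ ^ 2)) μ0) :
    ∀ r : ℝ, 0 < r → ∃ C : ℝ, 0 < C ∧ ∀ y y' : Y, ‖y‖ < r → ‖y'‖ < r →
      |(∫ u, Real.exp (-Φ u y) ∂μ0) - ∫ u, Real.exp (-Φ u y') ∂μ0| ≤ C * ‖y - y'‖ := by
  intro r hr
  simp only [← dist_eq_norm] at hiv ⊢
  exact stmt11_general (s := {y | ‖y‖ < r}) (half_pos hα).le (half_pos hα).le
    (by simpa only [add_halves] using hint) (fun y _ => (hmeas y).aemeasurable)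
    (hi _ r (half_pos hα) hr) (hiv _ r (half_pos hα) hr)
end

section
/- Let X be a separable Banach space and let μ0 be a Borel probability measure on X such that there exists α > 0 with ∫_X exp(α‖u‖_X²) dμ0(u) < ∞. Let Φ : X → ℝ and, for each N ∈ ℕ, Φ^N : X → ℝ be Borel measurable and satisfy, with constants uniform in N: for every ε > 0 there is M = M(ε) ∈ ℝ with Φ(u) ≥ M − ε‖u‖_X² and Φ^N(u) ≥ M − ε‖u‖_X² for all u ∈ X. Assume moreover that for every ε > 0 there is K = K(ε) > 0 such that |Φ(u) − Φ^N(u)| ≤ K exp(ε‖u‖_X²) Ψ(N) for all u ∈ X and all N, where Ψ : ℕ → [0,∞). Then the normalization constants Z = ∫_X exp(−Φ(u)) dμ0(u) and Z^N = ∫_X exp(−Φ^N(u)) dμ0(u) satisfy |Z − Z^N| ≤ C Ψ(N) for a constant C independent of N. -/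
open MeasureTheory

/-!
On the half-line `(-∞, c]` the exponential is Lipschitz with constant `exp c`. The lower bound with
`ε = α / 2` therefore gives, pointwise,
`|exp (-Φ) - exp (-ΦN N)| ≤ exp (α / 2 * ‖u‖ ^ 2 - M) * |Φ - ΦN N|`, and the approximation property
with `ε = α / 2` supplies the other half of the exponent, so the right-hand side is at most a
constant times `exp (α * ‖u‖ ^ 2) * Ψ N`, which is integrable.
-/

theorem abs_exp_sub_exp_le_exp_mul_abs_sub {x y c : ℝ} (hx : x ≤ c) (hy : y ≤ c) :
    |Real.exp x - Real.exp y| ≤ Real.exp c * |x - y| :=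
  (convex_Iic c).norm_image_sub_le_of_norm_hasDerivWithin_le
    (fun t _ ↦ (Real.hasDerivAt_exp t).hasDerivWithinAt)
    (fun t ht ↦ by simpa only [Real.norm_eq_abs, Real.abs_exp] using Real.exp_le_exp.2 ht)
    hy hx

section Potential

variable {Ω : Type*} [MeasurableSpace Ω] {μ : Measure Ω} {Φ Φ' w : Ω → ℝ}

theorem integrable_exp_neg_of_ae_neg_le (hΦ : AEMeasurable Φ μ)
    (hw : Integrable (fun u ↦ Real.exp (w u)) μ) (hle : ∀ᵐ u ∂μ, -w u ≤ Φ u) :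
    Integrable (fun u ↦ Real.exp (-Φ u)) μ := by
  refine hw.mono' hΦ.neg.exp.aestronglyMeasurable ?_
  filter_upwards [hle] with u hu
  simpa only [Real.norm_eq_abs, Real.abs_exp] using Real.exp_le_exp.2 (neg_le.1 hu)

theorem abs_integral_exp_neg_sub_integral_exp_neg_le_s12 {h : Ω → ℝ}
    (hΦ : AEMeasurable Φ μ) (hΦ' : AEMeasurable Φ' μ)
    (hw : Integrable (fun u ↦ Real.exp (w u)) μ)
    (hwh : Integrable (fun u ↦ Real.exp (w u) * h u) μ)
    (hle : ∀ᵐ u ∂μ, -w u ≤ Φ u) (hle' : ∀ᵐ u ∂μ, -w u ≤ Φ' u)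
    (hdiff : ∀ᵐ u ∂μ, |Φ u - Φ' u| ≤ h u) :
    |(∫ u, Real.exp (-Φ u) ∂μ) - ∫ u, Real.exp (-Φ' u) ∂μ| ≤ ∫ u, Real.exp (w u) * h u ∂μ := by
  rw [← integral_sub (integrable_exp_neg_of_ae_neg_le hΦ hw hle)
    (integrable_exp_neg_of_ae_neg_le hΦ' hw hle'), ← Real.norm_eq_abs]
  refine norm_integral_le_of_norm_le hwh ?_
  filter_upwards [hle, hle', hdiff] with u hu hu' hd
  calc |Real.exp (-Φ u) - Real.exp (-Φ' u)|
      ≤ Real.exp (w u) * |-Φ u - -Φ' u| :=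
        abs_exp_sub_exp_le_exp_mul_abs_sub (neg_le.1 hu) (neg_le.1 hu')
    _ = Real.exp (w u) * |Φ u - Φ' u| := by rw [neg_sub_neg, abs_sub_comm]
    _ ≤ Real.exp (w u) * h u := by gcongr

end Potential

theorem stmt12_general {Ω ι : Type*} [MeasurableSpace Ω] {μ : Measure Ω} {g : Ω → ℝ} {a b : ℝ}
    (ha : Integrable (fun u ↦ Real.exp (a * g u)) μ)
    (hab : Integrable (fun u ↦ Real.exp ((a + b) * g u)) μ)
    {Φ : Ω → ℝ} {ΦN : ι → Ω → ℝ} (hΦ : AEMeasurable Φ μ) (hΦN : ∀ N, AEMeasurable (ΦN N) μ)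
    (hlower : ∃ M : ℝ, ∀ᵐ u ∂μ, M - a * g u ≤ Φ u ∧ ∀ N, M - a * g u ≤ ΦN N u)
    {Ψ : ι → ℝ}
    (happrox : ∃ K : ℝ, ∀ᵐ u ∂μ, ∀ N, |Φ u - ΦN N u| ≤ K * Real.exp (b * g u) * Ψ N) :
    ∃ C : ℝ, ∀ N,
      |(∫ u, Real.exp (-Φ u) ∂μ) - ∫ u, Real.exp (-ΦN N u) ∂μ| ≤ C * Ψ N := by
  obtain ⟨M, hM⟩ := hlower
  obtain ⟨K, hK⟩ := happrox
  refine ⟨Real.exp (-M) * K * ∫ u, Real.exp ((a + b) * g u) ∂μ, fun N ↦ ?_⟩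
  have hweight : Integrable (fun u ↦ Real.exp (a * g u - M)) μ := by
    simpa only [Real.exp_sub] using ha.div_const (Real.exp M)
  have hfactor (u : Ω) : Real.exp (a * g u - M) * (K * Real.exp (b * g u) * Ψ N) =
      Real.exp (-M) * K * Ψ N * Real.exp ((a + b) * g u) := by
    rw [sub_eq_add_neg, add_mul, Real.exp_add, Real.exp_add]
    ring
  calc |(∫ u, Real.exp (-Φ u) ∂μ) - ∫ u, Real.exp (-ΦN N u) ∂μ|
      ≤ ∫ u, Real.exp (a * g u - M) * (K * Real.exp (b * g u) * Ψ N) ∂μ := by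
        refine abs_integral_exp_neg_sub_integral_exp_neg_le_s12 hΦ (hΦN N) hweight
          (by simpa only [hfactor] using hab.const_mul _) ?_ ?_ (hK.mono fun u hu ↦ hu N)
        · simpa only [neg_sub] using hM.mono fun u hu ↦ hu.1
        · simpa only [neg_sub] using hM.mono fun u hu ↦ hu.2 N
    _ = Real.exp (-M) * K * (∫ u, Real.exp ((a + b) * g u) ∂μ) * Ψ N := by
        simp only [hfactor, integral_const_mul]
        ring

theorem stmt12 {X : Type*} [NormedAddCommGroup X] [NormedSpace ℝ X] [CompleteSpace X]
    [TopologicalSpace.SeparableSpace X] [MeasurableSpace X] [BorelSpace X]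
    (μ0 : Measure X) [IsProbabilityMeasure μ0]
    (α : ℝ) (hα : 0 < α)
    (hint : Integrable (fun u => Real.exp (α * ‖u‖ ^ 2)) μ0)
    (Φ : X → ℝ) (ΦN : ℕ → X → ℝ)
    (hmeas : Measurable Φ) (hmeasN : ∀ N, Measurable (ΦN N))
    -- lower bound, with constants uniform in N
    (hi : ∀ ε : ℝ, 0 < ε → ∃ M : ℝ, ∀ u : X,
      (M - ε * ‖u‖ ^ 2 ≤ Φ u) ∧ ∀ N : ℕ, M - ε * ‖u‖ ^ 2 ≤ ΦN N u)
    (Ψ : ℕ → ℝ) (hΨ : ∀ N, 0 ≤ Ψ N)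
    -- approximation property
    (happrox : ∀ ε : ℝ, 0 < ε → ∃ K : ℝ, 0 < K ∧ ∀ (u : X) (N : ℕ),
      |Φ u - ΦN N u| ≤ K * Real.exp (ε * ‖u‖ ^ 2) * Ψ N) :
    ∃ C : ℝ, ∀ N : ℕ,
      |(∫ u, Real.exp (-Φ u) ∂μ0) - ∫ u, Real.exp (-ΦN N u) ∂μ0| ≤ C * Ψ N := by
  have hhalf : 0 < α / 2 := half_pos hα
  exact stmt12_general (a := α / 2) (b := α / 2)
    (ProbabilityTheory.integrable_exp_mul_of_nonneg_of_le hint hhalf.le (half_le_self hα.le))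
    (by rwa [add_halves]) hmeas.aemeasurable (fun N ↦ (hmeasN N).aemeasurable)
    ((hi _ hhalf).imp fun _ hM ↦ .of_forall hM)
    ((happrox _ hhalf).imp fun _ hK ↦ .of_forall hK.2)
end

section
/- Let X be a separable Banach space and let μ0 be a Borel probability measure on X such that there exists α > 0 with ∫_X exp(α‖u‖_X²) dμ0(u) < ∞. Let Φ : X → ℝ and, for each N ∈ ℕ, Φ^N : X → ℝ be Borel measurable and satisfy, with constants uniform in N: for every ε > 0 there is M = M(ε) ∈ ℝ with Φ(u) ≥ M − ε‖u‖_X² and Φ^N(u) ≥ M − ε‖u‖_X² for all u ∈ X. Assume moreover that for every R > 0 there is K = K(R) > 0 such that |Φ(u) − Φ^N(u)| ≤ K Ψ(N) for all u ∈ X with ‖u‖_X ≤ R and all N, where Ψ(N) → 0 as N → ∞. Then the normalization constants Z^N = ∫_X exp(−Φ^N(u)) dμ0(u) converge to Z = ∫_X exp(−Φ(u)) dμ0(u) as N → ∞. -/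
open MeasureTheory Filter

/-! Taking `ε = α` in the lower bound dominates every density `exp (-Φ^N)` by the single integrable
function `exp (-M) * exp (α ‖u‖ ^ 2)`. Since each point lies in some ball, `Φ^N → Φ` pointwise, and
dominated convergence applies. -/

theorem tendsto_of_abs_sub_le_const_mul {ι : Type*} {l : Filter ι} {a K : ℝ} {b ψ : ι → ℝ}
    (hψ : Tendsto ψ l (nhds 0)) (hab : ∀ n, |a - b n| ≤ K * ψ n) :
    Tendsto b l (nhds a) := by
  have hKψ : Tendsto (fun n => K * ψ n) l (nhds 0) := by
    simpa only [mul_zero] using hψ.const_mul K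
  refine tendsto_iff_dist_tendsto_zero.mpr (squeeze_zero (fun _ => dist_nonneg) (fun n => ?_) hKψ)
  rw [dist_comm, Real.dist_eq]
  exact hab n

theorem tendsto_of_abs_sub_le_const_mul_on_balls {ι E : Type*} [SeminormedAddGroup E]
    {l : Filter ι} {f : E → ℝ} {F : ι → E → ℝ} {ψ : ι → ℝ} (hψ : Tendsto ψ l (nhds 0))
    (hfF : ∀ R : ℝ, 0 < R → ∃ K : ℝ, ∀ (u : E) (n : ι), ‖u‖ ≤ R → |f u - F n u| ≤ K * ψ n)
    (u : E) :
    Tendsto (fun n => F n u) l (nhds (f u)) := by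
  obtain ⟨K, hK⟩ := hfF (‖u‖ + 1) (by positivity)
  exact tendsto_of_abs_sub_le_const_mul hψ fun n => hK u n (le_add_of_nonneg_right zero_le_one)

theorem integrable_exp_neg_const_sub {Ω : Type*} [MeasurableSpace Ω] {μ : Measure Ω} {f : Ω → ℝ}
    (hf : Integrable (fun x => Real.exp (f x)) μ) (c : ℝ) :
    Integrable (fun x => Real.exp (-(c - f x))) μ := by
  simpa only [neg_sub, Real.exp_sub] using hf.div_const (Real.exp c)

theorem stmt13_general {Ω ι : Type*} [MeasurableSpace Ω] {μ : Measure Ω} {l : Filter ι}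
    [l.IsCountablyGenerated] {g V : Ω → ℝ} {W : ι → Ω → ℝ}
    (hg : Integrable (fun x => Real.exp (-g x)) μ)
    (hW : ∀ᶠ n in l, AEMeasurable (W n) μ)
    (hgW : ∀ᶠ n in l, ∀ᵐ x ∂μ, g x ≤ W n x)
    (hWV : ∀ᵐ x ∂μ, Tendsto (fun n => W n x) l (nhds (V x))) :
    Tendsto (fun n => ∫ x, Real.exp (-W n x) ∂μ) l (nhds (∫ x, Real.exp (-V x) ∂μ)) := by
  refine tendsto_integral_filter_of_dominated_convergence (fun x => Real.exp (-g x)) ?_ ?_ hg ?_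
  · filter_upwards [hW] with n hn
    exact hn.neg.exp.aestronglyMeasurable
  · filter_upwards [hgW] with n hn
    filter_upwards [hn] with x hx
    rw [Real.norm_eq_abs, Real.abs_exp]
    exact Real.exp_le_exp.mpr (neg_le_neg hx)
  · filter_upwards [hWV] with x hx
    exact hx.neg.rexp

theorem stmt13 {X : Type*} [NormedAddCommGroup X] [NormedSpace ℝ X] [CompleteSpace X]
    [TopologicalSpace.SeparableSpace X] [MeasurableSpace X] [BorelSpace X]
    (μ0 : Measure X) [IsProbabilityMeasure μ0]
    (α : ℝ) (hα : 0 < α)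
    (hint : Integrable (fun u => Real.exp (α * ‖u‖ ^ 2)) μ0)
    (Φ : X → ℝ) (ΦN : ℕ → X → ℝ)
    (hmeas : Measurable Φ) (hmeasN : ∀ N, Measurable (ΦN N))
    -- lower bound, with constants uniform in N
    (hi : ∀ ε : ℝ, 0 < ε → ∃ M : ℝ, ∀ u : X,
      (M - ε * ‖u‖ ^ 2 ≤ Φ u) ∧ ∀ N : ℕ, M - ε * ‖u‖ ^ 2 ≤ ΦN N u)
    (Ψ : ℕ → ℝ) (hΨ : Tendsto Ψ atTop (nhds 0))
    -- approximation property on balls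
    (happrox : ∀ R : ℝ, 0 < R → ∃ K : ℝ, 0 < K ∧ ∀ (u : X) (N : ℕ), ‖u‖ ≤ R →
      |Φ u - ΦN N u| ≤ K * Ψ N) :
    Tendsto (fun N : ℕ => ∫ u, Real.exp (-ΦN N u) ∂μ0) atTop
      (nhds (∫ u, Real.exp (-Φ u) ∂μ0)) := by
  obtain ⟨M, hM⟩ := hi α hα
  exact stmt13_general (integrable_exp_neg_const_sub hint M)
    (.of_forall fun N => (hmeasN N).aemeasurable)
    (.of_forall fun N => .of_forall fun u => (hM u).2 N)
    (.of_forall (tendsto_of_abs_sub_le_const_mul_on_balls hΨ fun R hR =>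
      (happrox R hR).imp fun _ hK => hK.2))
end

section
/- Let X be a separable Banach space and Y a Banach space, let Φ : X × Y → ℝ satisfy condition (ii), with Φ(·;y) Borel measurable for each y ∈ Y, and let μ0 be a Borel probability measure on X which assigns positive mass to every open ball of X. Then for every r > 0 there is a positive lower bound on the normalization constant, uniform over data of norm less than r: for all y ∈ Y with ‖y‖_Y < r, Z(y) = ∫_X exp(−Φ(u;y)) dμ0(u) ≥ exp(−K(r)) · μ0({u ∈ X : ‖u‖_X < r}) > 0. -/
open MeasureTheory

theorem const_mul_measure_le_lintegral {α : Type*} [MeasurableSpace α] {μ : Measure α}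
    {s : Set α} {f : α → ENNReal} {c : ENNReal} (hs : MeasurableSet s) (hf : ∀ x ∈ s, c ≤ f x) :
    c * μ s ≤ ∫⁻ x, f x ∂μ :=
  calc
    c * μ s = ∫⁻ _ in s, c ∂μ := (setLIntegral_const s c).symm
    _ ≤ ∫⁻ x in s, f x ∂μ := setLIntegral_mono' hs hf
    _ ≤ ∫⁻ x, f x ∂μ := setLIntegral_le_lintegral s f

theorem exp_neg_mul_measure_le_lintegral_exp_neg {α : Type*} [MeasurableSpace α] {μ : Measure α}
    {s : Set α} {φ : α → ℝ} {M : ℝ} (hs : MeasurableSet s) (hφ : ∀ x ∈ s, φ x ≤ M) :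
    ENNReal.ofReal (Real.exp (-M)) * μ s ≤ ∫⁻ x, ENNReal.ofReal (Real.exp (-φ x)) ∂μ :=
  const_mul_measure_le_lintegral hs fun x hx =>
    ENNReal.ofReal_le_ofReal (Real.exp_le_exp.mpr (neg_le_neg (hφ x hx)))

theorem stmt17_general {X Y : Type*} [SeminormedAddCommGroup X] [MeasurableSpace X]
    [OpensMeasurableSpace X] [Norm Y] (Φ : X → Y → ℝ) (K : ℝ → ℝ)
    (hK : ∀ r : ℝ, 0 < r → ∀ (u : X) (y : Y), ‖u‖ < r → ‖y‖ < r → Φ u y ≤ K r)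
    (μ0 : Measure X) (hball : ∀ r : ℝ, 0 < r → 0 < μ0 (Metric.ball 0 r)) :
    ∀ r : ℝ, 0 < r → ∀ y : Y, ‖y‖ < r →
      ENNReal.ofReal (Real.exp (-K r)) * μ0 {u : X | ‖u‖ < r} ≤
        (∫⁻ u, ENNReal.ofReal (Real.exp (-Φ u y)) ∂μ0) ∧
      0 < ENNReal.ofReal (Real.exp (-K r)) * μ0 {u : X | ‖u‖ < r} := by
  intro r hr y hy
  have potential_le : ∀ u ∈ Metric.ball (0 : X) r, Φ u y ≤ K r := fun u hu =>
    hK r hr u y (mem_ball_zero_iff.mp hu) hy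
  have exp_pos : 0 < ENNReal.ofReal (Real.exp (-K r)) := ENNReal.ofReal_pos.mpr (Real.exp_pos _)
  rw [← ball_zero_eq]
  exact ⟨exp_neg_mul_measure_le_lintegral_exp_neg measurableSet_ball potential_le,
    ENNReal.mul_pos exp_pos.ne' (hball r hr).ne'⟩

theorem stmt17 {X Y : Type*} [NormedAddCommGroup X] [NormedSpace ℝ X] [CompleteSpace X]
    [TopologicalSpace.SeparableSpace X] [MeasurableSpace X] [BorelSpace X]
    [NormedAddCommGroup Y] [NormedSpace ℝ Y] [CompleteSpace Y]
    (Φ : X → Y → ℝ)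
    (hmeas : ∀ y : Y, Measurable fun u => Φ u y)
    -- condition (ii), with the bound `K r`
    (K : ℝ → ℝ)
    (hK : ∀ r : ℝ, 0 < r → 0 < K r ∧ ∀ (u : X) (y : Y), ‖u‖ < r → ‖y‖ < r → Φ u y ≤ K r)
    (μ0 : Measure X) [IsProbabilityMeasure μ0]
    (hball : ∀ (x : X) (r : ℝ), 0 < r → 0 < μ0 (Metric.ball x r)) :
    ∀ r : ℝ, 0 < r → ∀ y : Y, ‖y‖ < r →
      ENNReal.ofReal (Real.exp (-K r)) * μ0 {u : X | ‖u‖ < r} ≤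
        (∫⁻ u, ENNReal.ofReal (Real.exp (-Φ u y)) ∂μ0) ∧
      0 < ENNReal.ofReal (Real.exp (-K r)) * μ0 {u : X | ‖u‖ < r} :=
  stmt17_general Φ K (fun r hr => (hK r hr).2) μ0 (hball 0)
end
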